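/- arXiv:1810.11342 — 2 statements merged into one kernel-verified Lean document; each statement's English description precedes it below -/
import Mathlib

section
/- Let n ≥ 2 and 1 ≤ ν ≤ n−1. Let P = P₁ + P₂ where P₁ ∈ ℂ[z₁,…,z_ν] and P₂ ∈ ℂ[z_{ν+1},…,zₙ] are nonconstant polynomials depending on disjoint sets of variables with P₁(0) = P₂(0) = 0; write d₁ = deg P₁, d₂ = deg P₂. Let 𝔄ⱼ (j = 1,2) be the set of vertices v of N(Pⱼ) with Σᵢ vᵢ = dⱼ; define 𝔄₁₁ = {v ∈ 𝔄₁ : v₁ ≥ w₁ for all w ∈ 𝔄₁} and, for 2 ≤ i ≤ ν, 𝔄₁ᵢ = {v ∈ 𝔄₁₍ᵢ₋₁₎ : vᵢ ≥ wᵢ for all w ∈ 𝔄₁₍ᵢ₋₁₎}. For 1 ≤ i ≤ ν set Cᵢ = { tα + (1−t)β : t ∈ [0,1], α ∈ conv(𝔄₁ᵢ), β ∈ conv(𝔄₂) } and Hᵢ = {x ∈ ℝⁿ : d₂ xᵢ + (Σ_{j=1}^{n−ν} x_{ν+j}) vᵢ = vᵢ d₂}, where vᵢ is the i-th coordinate of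 any element of 𝔄₁ᵢ. Then for each i with 1 ≤ i ≤ ν−1, Cᵢ ∩ H_{i+1} = C_{i+1} and C_{i+1} is a face of Cᵢ. -/
/-!
The linear functional `L x = d₂ xᵢ₊₁ + vᵢ₊₁ ∑_{j > ν} x_j` and the level `vᵢ₊₁ d₂` cut out the
hyperplane `H_{i+1}`. Points of `conv(𝔄₁ᵢ)` vanish in the coordinates after `ν`, and points of
`conv(𝔄₂)` vanish in the first `ν` coordinates and have coordinate sum `d₂`; hence for
`x = tα + (1-t)β` one gets `vᵢ₊₁ d₂ - L x = d₂ t (vᵢ₊₁ - αᵢ₊₁)`. As `vᵢ₊₁` is the maximum of the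
coordinate `i + 1` on `𝔄₁ᵢ`, this is nonnegative on `Cᵢ`, and it vanishes iff `t = 0` or `α` lies
in the face of `conv(𝔄₁ᵢ)` where that maximum is attained, which is `conv(𝔄₁₍ᵢ₊₁₎)`
(`mem_convexHull_of_eq_max`). Since `𝔄₁₍ᵢ₊₁₎` is nonempty, the points with `t = 0` belong to
`C_{i+1}` too. A supporting hyperplane must meet `Cᵢ`, which needs `𝔄₂ ≠ ∅`: this is
`exists_top_vertex`, an application of the existence of extreme points of compact sets.
-/

open Pointwise

/-- The Newton polytope of a polynomial in `n` variables: the convex hull in `ℝⁿ`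
of the set of exponent vectors of monomials appearing with nonzero coefficient. -/
def newtonPolytope {n : ℕ} (P : MvPolynomial (Fin n) ℂ) : Set (Fin n → ℝ) :=
  convexHull ℝ ((fun (m : Fin n →₀ ℕ) (i : Fin n) => (m i : ℝ)) '' (P.support : Set (Fin n →₀ ℕ)))

/-- A vertex of a set `S ⊆ ℝⁿ`: a point of `S` that does not lie in the interior of the
convex hull of two distinct points of `S`. -/
def IsVertex {n : ℕ} (S : Set (Fin n → ℝ)) (v : Fin n → ℝ) : Prop :=
  v ∈ S ∧ ¬ ∃ a ∈ S, ∃ b ∈ S, a ≠ b ∧ v ∈ openSegment ℝ a b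

/-- An integral polytope: the convex hull of finitely many integral points. -/
def IsIntegralPolytope {n : ℕ} (C : Set (Fin n → ℝ)) : Prop :=
  ∃ F : Finset (Fin n → ℝ), F.Nonempty ∧ (∀ x ∈ F, ∀ i, ∃ k : ℤ, x i = (k : ℝ)) ∧
    C = convexHull ℝ (F : Set (Fin n → ℝ))

/-- An integral polytope is integrally decomposable if it is the Minkowski sum of two
integral polytopes each containing at least two points. -/
def IntegrallyDecomposable {n : ℕ} (C : Set (Fin n → ℝ)) : Prop :=
  ∃ A B : Set (Fin n → ℝ), IsIntegralPolytope A ∧ IsIntegralPolytope B ∧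
    (∃ a ∈ A, ∃ a' ∈ A, a ≠ a') ∧ (∃ b ∈ B, ∃ b' ∈ B, b ≠ b') ∧ C = A + B

/-- `F` is a face of the convex set `C`: `F = C ∩ H` for a supporting hyperplane `H` of `C`. -/
def IsFace {n : ℕ} (C F : Set (Fin n → ℝ)) : Prop :=
  ∃ (α : Fin n → ℝ) (γ : ℝ), α ≠ 0 ∧
    (C ∩ {x | ∑ i, α i * x i = γ}).Nonempty ∧
    ((∀ x ∈ C, ∑ i, α i * x i ≤ γ) ∨ (∀ x ∈ C, γ ≤ ∑ i, α i * x i)) ∧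
    F = C ∩ {x | ∑ i, α i * x i = γ}

/-- A point of a convex hull at which a linear functional attains its maximum over the generating
set is in the convex hull of the generators attaining that maximum. -/
lemma mem_convexHull_of_eq_max {E : Type*} [AddCommGroup E] [Module ℝ E] (f : E →ₗ[ℝ] ℝ)
    {S : Set E} {c : ℝ} (hS : ∀ s ∈ S, f s ≤ c) {x : E} (hx : x ∈ convexHull ℝ S) :
    f x ≤ c ∧ (f x = c → x ∈ convexHull ℝ {s ∈ S | f s = c}) := by
  -- The set of points with this property is itself convex and contains `S`.
  have hconv : Convex ℝ {x : E | f x ≤ c ∧ (f x = c → x ∈ convexHull ℝ {s ∈ S | f s = c})} := by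
    rw [convex_iff_forall_pos]
    rintro x ⟨hx1, hx2⟩ y ⟨hy1, hy2⟩ a b ha hb hab
    have e : f (a • x + b • y) = a * f x + b * f y := by simp
    have hb' : b = 1 - a := by linarith
    have h1 : a * f x ≤ a * c := mul_le_mul_of_nonneg_left hx1 ha.le
    have h2 : b * f y ≤ b * c := mul_le_mul_of_nonneg_left hy1 hb.le
    have h3 : a * c + b * c = c := by rw [← add_mul, hab, one_mul]
    refine ⟨by rw [e]; linarith, fun h => ?_⟩
    rw [e] at h
    have hxc : f x = c := mul_left_cancel₀ ha.ne' (by linarith)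
    have hyc : f y = c := mul_left_cancel₀ hb.ne' (by linarith)
    exact convex_convexHull ℝ _ (hx2 hxc) (hy2 hyc) ha.le hb.le hab
  refine convexHull_min (fun s hs => ?_) hconv hx
  exact ⟨hS s hs, fun h => subset_convexHull ℝ {s ∈ S | f s = c} ⟨hs, h⟩⟩

/-- If all exponents of `Q` vanish in coordinate `j`, so do all points of its Newton polytope. -/
lemma newtonPolytope_coord_eq_zero {n : ℕ} {Q : MvPolynomial (Fin n) ℂ} {j : Fin n}
    (h : ∀ m ∈ Q.support, m j = 0) {x : Fin n → ℝ} (hx : x ∈ newtonPolytope Q) : x j = 0 := by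
  have hc : Convex ℝ {x : Fin n → ℝ | x j = 0} := by
    intro x hx y hy a b _ _ _
    simp only [Set.mem_ofPred_eq] at hx hy
    simp [hx, hy]
  refine convexHull_min ?_ hc hx
  rintro _ ⟨m, hm, rfl⟩
  simpa using h m hm

/-- The Newton polytope of a nonzero polynomial has a vertex whose coordinate sum is the total
degree, namely any extreme point of the face of maximal coordinate sum. -/
lemma exists_top_vertex {n : ℕ} (Q : MvPolynomial (Fin n) ℂ) (hQ : Q ≠ 0) :
    ∃ v, IsVertex (newtonPolytope Q) v ∧ ∑ i, v i = (Q.totalDegree : ℝ) := by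
  classical
  let f : (Fin n → ℝ) →ₗ[ℝ] ℝ := ∑ i, LinearMap.proj i
  have hf : ∀ x, f x = ∑ i, x i := fun x => by simp [f]
  have hle : ∀ x ∈ newtonPolytope Q, ∑ i, x i ≤ (Q.totalDegree : ℝ) := by
    intro x hx
    rw [← hf]
    refine (mem_convexHull_of_eq_max f ?_ hx).1
    rintro _ ⟨m, hm, rfl⟩
    rw [hf]
    have := MvPolynomial.le_totalDegree (Finset.mem_coe.1 hm)
    rw [Finsupp.sum_fintype _ _ (fun _ => rfl)] at this
    simpa only [Nat.cast_sum] using (Nat.cast_le (α := ℝ)).2 this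
  have hcomp : IsCompact (newtonPolytope Q) :=
    (((Finset.finite_toSet Q.support).image _).isCompact_convexHull ℝ)
  set F : Set (Fin n → ℝ) := newtonPolytope Q ∩ {x | ∑ i, x i = (Q.totalDegree : ℝ)} with hF
  have hFc : IsCompact F :=
    hcomp.inter_right (isClosed_eq (by fun_prop) continuous_const)
  have hFne : F.Nonempty := by
    obtain ⟨m, hm, hmd⟩ := Finset.exists_mem_eq_sup Q.support
      (MvPolynomial.support_nonempty.2 hQ) (fun m => m.sum fun _ e => e)
    refine ⟨fun i => (m i : ℝ), subset_convexHull ℝ _ ⟨m, hm, rfl⟩, ?_⟩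
    have h2 : Q.totalDegree = ∑ i, m i := by
      rw [MvPolynomial.totalDegree, hmd, Finsupp.sum_fintype _ _ (fun _ => rfl)]
    simp [h2]
  obtain ⟨v, hv⟩ := hFc.extremePoints_nonempty hFne
  refine ⟨v, ⟨hv.1.1, ?_⟩, hv.1.2⟩
  rintro ⟨a, ha, b, hb, hab, hvab⟩
  -- The endpoints of a segment through `v` also lie in the face.
  have key : ∑ i, a i = (Q.totalDegree : ℝ) ∧ ∑ i, b i = (Q.totalDegree : ℝ) := by
    obtain ⟨s, t, hs, ht, hst, rfl⟩ := hvab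
    have h : ∑ i, (s • a + t • b) i = (Q.totalDegree : ℝ) := hv.1.2
    rw [← hf, map_add, map_smul, map_smul, hf, hf, smul_eq_mul, smul_eq_mul] at h
    have h1 := mul_le_mul_of_nonneg_left (hle a ha) hs.le
    have h2 := mul_le_mul_of_nonneg_left (hle b hb) ht.le
    have h3 : s * (Q.totalDegree : ℝ) + t * Q.totalDegree = Q.totalDegree := by
      rw [← add_mul, hst, one_mul]
    exact ⟨mul_left_cancel₀ hs.ne' (by linarith), mul_left_cancel₀ ht.ne' (by linarith)⟩
  have := (mem_extremePoints.1 hv).2 a ⟨ha, key.1⟩ b ⟨hb, key.2⟩ hvab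
  exact hab (this.1.trans this.2.symm)

/-- **Lemma.** For each `i` with `1 ≤ i ≤ ν − 1`, `Cᵢ ∩ H_{i+1} = C_{i+1}` and
`C_{i+1}` is a face of `Cᵢ`. -/
theorem subsequent_coordinate_faces
    (n ν : ℕ) (hn : 2 ≤ n) (hν1 : 1 ≤ ν) (hν2 : ν ≤ n - 1)
    (P P₁ P₂ : MvPolynomial (Fin n) ℂ)
    (hsum : P = P₁ + P₂)
    (hvar1 : ∀ m ∈ P₁.support, ∀ i : Fin n, ν ≤ (i : ℕ) → m i = 0)
    (hvar2 : ∀ m ∈ P₂.support, ∀ i : Fin n, (i : ℕ) < ν → m i = 0)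
    (hnc1 : 0 < P₁.totalDegree) (hnc2 : 0 < P₂.totalDegree)
    (h01 : MvPolynomial.coeff 0 P₁ = 0) (h02 : MvPolynomial.coeff 0 P₂ = 0)
    (d₁ d₂ : ℕ) (hd1 : d₁ = P₁.totalDegree) (hd2 : d₂ = P₂.totalDegree)
    (A₂ : Set (Fin n → ℝ))
    (hA2 : A₂ = {v : Fin n → ℝ | IsVertex (newtonPolytope P₂) v ∧ ∑ i, v i = (d₂ : ℝ)})
    (A : ℕ → Set (Fin n → ℝ))
    (hA0 : A 0 = {v : Fin n → ℝ | IsVertex (newtonPolytope P₁) v ∧ ∑ i, v i = (d₁ : ℝ)})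
    (hArec : ∀ i (hi : i < ν),
      A (i + 1) = {v ∈ A i | ∀ w ∈ A i, w ⟨i, by omega⟩ ≤ v ⟨i, by omega⟩})
    (v : ℕ → ℝ)
    (hv : ∀ i (hi1 : 1 ≤ i) (hi2 : i ≤ ν), ∃ w ∈ A i, w ⟨i - 1, by omega⟩ = v i)
    (C H : ℕ → Set (Fin n → ℝ))
    (hC : ∀ i, C i = {x : Fin n → ℝ | ∃ t ∈ Set.Icc (0 : ℝ) 1, ∃ α ∈ convexHull ℝ (A i),
      ∃ β ∈ convexHull ℝ A₂, x = t • α + (1 - t) • β})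
    (hH : ∀ i (hi1 : 1 ≤ i) (hi2 : i ≤ ν), H i = {x : Fin n → ℝ |
      (d₂ : ℝ) * x ⟨i - 1, by omega⟩ +
        (∑ j ∈ Finset.univ.filter (fun j : Fin n => ν ≤ (j : ℕ)), x j) * v i
          = v i * (d₂ : ℝ)}) :
    ∀ i, 1 ≤ i → i ≤ ν - 1 → C i ∩ H (i + 1) = C (i + 1) ∧ IsFace (C i) (C (i + 1)) := by
  intro i hi1 hi2
  have hiν : i < ν := by omega
  have hin : i < n := by omega
  have hd2pos : (0 : ℝ) < d₂ := by rw [hd2]; exact_mod_cast hnc2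
  have hAsub : ∀ k, k ≤ ν → A k ⊆ A 0 := by
    intro k
    induction k with
    | zero => intro _; exact subset_rfl
    | succ k ih =>
      intro hk
      rw [hArec k (by omega)]
      exact fun x hx => ih (by omega) hx.1
  obtain ⟨w, hw, hwv⟩ := hv (i + 1) (by omega) (by omega)
  simp only [Nat.add_sub_cancel] at hwv
  have hA2ne : A₂.Nonempty := by
    obtain ⟨u, hu, hus⟩ := exists_top_vertex P₂ (by rintro rfl; simp at hnc2)
    exact ⟨u, by rw [hA2, hd2]; exact ⟨hu, hus⟩⟩
  have hwA := hw
  rw [hArec i hiν] at hwA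
  have hmax : ∀ a ∈ A i, a ⟨i, hin⟩ ≤ v (i + 1) := fun a ha => hwv ▸ hwA.2 a ha
  have hAeq : A (i + 1) = {a ∈ A i | a ⟨i, hin⟩ = v (i + 1)} := by
    rw [hArec i hiν]
    ext a
    refine and_congr_right fun ha => ⟨fun h => ?_, fun h b hb => ?_⟩
    · exact le_antisymm (hmax a ha) (hwv ▸ h w hwA.1)
    · rw [h]; exact hmax b hb
  have hα : ∀ a ∈ convexHull ℝ (A i), a ⟨i, hin⟩ ≤ v (i + 1) ∧
      (a ⟨i, hin⟩ = v (i + 1) → a ∈ convexHull ℝ (A (i + 1))) := by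
    intro a ha
    rw [hAeq]
    exact mem_convexHull_of_eq_max (LinearMap.proj (⟨i, hin⟩ : Fin n)) hmax ha
  have hα0 : ∀ a ∈ convexHull ℝ (A i), ∀ j : Fin n, ν ≤ (j : ℕ) → a j = 0 := by
    intro a ha j hj
    refine newtonPolytope_coord_eq_zero (fun m hm => hvar1 m hm j hj)
      (convexHull_min (fun s hs => ?_) (convex_convexHull ℝ _) ha)
    have := hAsub i hiν.le hs
    rw [hA0] at this
    exact this.1.1
  have hβ0 : ∀ b ∈ convexHull ℝ A₂, ∀ j : Fin n, (j : ℕ) < ν → b j = 0 := by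
    intro b hb j hj
    refine newtonPolytope_coord_eq_zero (fun m hm => hvar2 m hm j hj)
      (convexHull_min (fun s hs => ?_) (convex_convexHull ℝ _) hb)
    rw [hA2] at hs
    exact hs.1.1
  have hβs : ∀ b ∈ convexHull ℝ A₂, ∑ j, b j = (d₂ : ℝ) := by
    intro b hb
    have hc : Convex ℝ {b : Fin n → ℝ | ∑ j, b j = (d₂ : ℝ)} := by
      intro x hx y hy a b _ _ hab
      simp only [Set.mem_ofPred_eq] at hx hy
      simp only [Set.mem_ofPred_eq, Pi.add_apply, Pi.smul_apply, smul_eq_mul,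
        Finset.sum_add_distrib, ← Finset.mul_sum, hx, hy]
      rw [← add_mul, hab, one_mul]
    refine convexHull_min (fun s hs => ?_) hc hb
    rw [hA2] at hs
    exact hs.2
  let L : (Fin n → ℝ) → ℝ := fun x => (d₂ : ℝ) * x ⟨i, hin⟩ +
    (∑ j ∈ Finset.univ.filter (fun j : Fin n => ν ≤ (j : ℕ)), x j) * v (i + 1)
  have hL : ∀ (t : ℝ), ∀ a ∈ convexHull ℝ (A i), ∀ b ∈ convexHull ℝ A₂,
      L (t • a + (1 - t) • b) = v (i + 1) * d₂ - d₂ * t * (v (i + 1) - a ⟨i, hin⟩) := by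
    intro t a ha b hb
    have h1 : ∑ j ∈ Finset.univ.filter (fun j : Fin n => ν ≤ (j : ℕ)), a j = 0 :=
      Finset.sum_eq_zero fun j hj => hα0 a ha j (Finset.mem_filter.1 hj).2
    have h2 : ∑ j ∈ Finset.univ.filter (fun j : Fin n => ν ≤ (j : ℕ)), b j = d₂ := by
      rw [← hβs b hb]
      refine Finset.sum_subset (Finset.filter_subset _ _) fun j _ hj => hβ0 b hb j ?_
      simpa using hj
    simp only [L, Pi.add_apply, Pi.smul_apply, smul_eq_mul, Finset.sum_add_distrib,
      ← Finset.mul_sum, h1, h2, hβ0 b hb ⟨i, hin⟩ hiν]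
    ring
  have hHL : H (i + 1) = {x | L x = v (i + 1) * d₂} := hH (i + 1) (by omega) (by omega)
  have hCne : (C (i + 1)).Nonempty := by
    obtain ⟨u, hu⟩ := hA2ne
    rw [hC]
    exact ⟨_, 1, by simp, w, subset_convexHull ℝ _ hw, u, subset_convexHull ℝ _ hu, rfl⟩
  have hconvsub : convexHull ℝ (A (i + 1)) ⊆ convexHull ℝ (A i) :=
    convexHull_mono (by rw [hAeq]; exact fun x hx => hx.1)
  have hmain : C i ∩ H (i + 1) = C (i + 1) := by
    rw [hHL, hC i, hC (i + 1)]
    ext x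
    constructor
    · rintro ⟨⟨t, ht, a, ha, b, hb, rfl⟩, hx⟩
      rw [Set.mem_ofPred_eq, hL t a ha b hb] at hx
      have hz : (d₂ : ℝ) * t * (v (i + 1) - a ⟨i, hin⟩) = 0 := by linarith
      rcases mul_eq_zero.1 hz with h | h
      · have ht0 : t = 0 := (mul_eq_zero.1 h).resolve_left hd2pos.ne'
        -- For `t = 0` the choice of `α` is immaterial.
        exact ⟨0, by simp, w, subset_convexHull ℝ _ hw, b, hb, by simp [ht0]⟩
      · exact ⟨t, ht, a, (hα a ha).2 (by linarith), b, hb, rfl⟩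
    · rintro ⟨t, ht, a, ha, b, hb, rfl⟩
      have hav : a ⟨i, hin⟩ = v (i + 1) := by
        have hc : Convex ℝ {a : Fin n → ℝ | a ⟨i, hin⟩ = v (i + 1)} :=
          convex_hyperplane (LinearMap.proj (⟨i, hin⟩ : Fin n) : (Fin n → ℝ) →ₗ[ℝ] ℝ).isLinear _
        exact convexHull_min (by rw [hAeq]; exact fun x hx => hx.2) hc ha
      refine ⟨⟨t, ht, a, hconvsub ha, b, hb, rfl⟩, ?_⟩
      rw [Set.mem_ofPred_eq, hL t a (hconvsub ha) b hb, hav]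
      ring
  -- The coefficient vector of `L`.
  let c : Fin n → ℝ := fun j => (if j = ⟨i, hin⟩ then (d₂ : ℝ) else 0) +
    if ν ≤ (j : ℕ) then v (i + 1) else 0
  have hcL : ∀ x, ∑ j, c j * x j = L x := by
    intro x
    simp only [c, L, add_mul, ite_mul, zero_mul, Finset.sum_add_distrib, Finset.sum_ite_eq',
      Finset.mem_univ, if_true, Finset.sum_mul, Finset.sum_filter]
    congr 1
    exact Finset.sum_congr rfl fun j _ => by rw [mul_comm]
  have hset : {x : Fin n → ℝ | ∑ j, c j * x j = v (i + 1) * d₂} = H (i + 1) := by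
    rw [hHL]; simp only [hcL]
  refine ⟨hmain, c, v (i + 1) * d₂, ?_, ?_, Or.inl ?_, ?_⟩
  · intro h
    have := congrFun h ⟨i, hin⟩
    simp [c, not_le.2 hiν, hd2pos.ne'] at this
  · rw [hset, hmain]; exact hCne
  · intro x hx
    rw [hC] at hx
    obtain ⟨t, ht, a, ha, b, hb, rfl⟩ := hx
    rw [hcL, hL t a ha b hb]
    have := mul_nonneg (mul_nonneg hd2pos.le ht.1) (sub_nonneg.2 (hα a ha).1)
    linarith
  · rw [hset, hmain]
end

section
/- Let n ≥ 3 and 2 ≤ ν ≤ n−1. Let P₁ = Q₁ + Q₂ where Q₁ ∈ ℂ[z₁] is a nonconstant polynomial of degree r and Q₂ ∈ ℂ[z₂,…,z_ν] is a nonconstant polynomial of degree m, with Q₁(0) = Q₂(0) = 0. If gcd(r, m) = 1, then the Newton polytope N(P₁) is integrally indecomposable. -/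
/-!
The polytope `C = N(P₁)` is the convex hull of points `k e₁` with `1 ≤ k ≤ r` and of points in
the hyperplane `x₁ = 0` of total degree at most `m`. Let `f` be the first coordinate, `g` the sum of
the other coordinates and `L = m f + r g`. Then `0 ≤ f ≤ r` on `C`, with `f = r` only at
`p = r e₁`, and `L ≤ r m` on `C`, with equality at `p` and at some point `v` of the
hyperplane `f = 0`.

Suppose `C = A + B` and write `p = a + b`. Then `a` and `b` are the unique maximizers of `f` on `A`
and `B`, hence integral vertices, and they also maximize `L`. An integral generator `x` of `A` with
`L x = L a` satisfies `m (f a - f x) = r (g x - g a)`, so `r ∣ f a - f x` by coprimality; as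
`0 ≤ f a - f x ≤ r`, either `x = a`, or `f x = f a - r`. In the latter case `f ≥ 0` on `x + B`
forces `f ≥ f b` on `B`, so `B = {b}` (`eq_or_subsingleton`). If this happens neither for `A` nor
for `B`, then `L` is maximized on `A` only at `a` and on `B` only at `b`, so on `C` only at `p`,
contradicting the existence of `v` (`subsingleton_or_subsingleton`).
-/

open Pointwise

/-- If a linear functional is strictly smaller than at `p` on all generators other than `p`,
then this persists on their convex hull. -/
lemma eq_or_lt_of_mem_convexHull {E : Type*} [AddCommGroup E] [Module ℝ E] (f : E →ₗ[ℝ] ℝ)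
    (S : Set E) (p : E) (h : ∀ x ∈ S, x = p ∨ f x < f p) :
    ∀ x ∈ convexHull ℝ S, x = p ∨ f x < f p := by
  have hc : Convex ℝ {x : E | x = p ∨ f x < f p} := by
    rw [convex_iff_forall_pos]
    rintro x hx y hy s t hs ht hst
    have key : ∀ d : ℝ, s * d + t * d = d := fun d => by rw [← add_mul, hst, one_mul]
    have := key (f p)
    simp only [Set.mem_ofPred_eq, map_add, map_smul, smul_eq_mul] at hx hy ⊢
    rcases hx with rfl | hx <;> rcases hy with rfl | hy
    · left; rw [← add_smul, hst, one_smul]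
    · right; nlinarith
    · right; nlinarith
    · right; nlinarith
  exact fun x hx => convexHull_min (fun y hy => h y hy) hc hx

lemma le_of_mem_convexHull {E : Type*} [AddCommGroup E] [Module ℝ E] (f : E →ₗ[ℝ] ℝ)
    (S : Set E) (c : ℝ) (h : ∀ x ∈ S, f x ≤ c) : ∀ x ∈ convexHull ℝ S, f x ≤ c :=
  fun _ hx => convexHull_min (t := {x | f x ≤ c}) h (convex_halfSpace_le f.isLinear c) hx

/-- A unique maximizer of a linear functional on a convex hull is one of the generators. -/
lemma mem_of_unique_max {E : Type*} [AddCommGroup E] [Module ℝ E] (f : E →ₗ[ℝ] ℝ)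
    (S : Set E) (a : E) (ha : a ∈ convexHull ℝ S)
    (h : ∀ x ∈ convexHull ℝ S, f a ≤ f x → x = a) : a ∈ S := by
  by_contra hn
  have : convexHull ℝ S ⊆ {x | f x < f a} := by
    refine convexHull_min (fun x hx => ?_) (convex_halfSpace_lt f.isLinear _)
    by_contra hlt
    exact hn (h x (subset_convexHull ℝ S hx) (not_lt.1 hlt) ▸ hx)
  exact lt_irrefl (f a) (this ha)

/-- The coprimality step: an integral point `x` at which `m f + r g` takes the same value as at the
`f`-maximizer `a` of the summand `A` is either at the same `f`-level as `a`, or so far below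
that there is no room left for `B`. -/
lemma eq_or_subsingleton {E : Type*} [AddCommGroup E] [Module ℝ E] (f g : E →ₗ[ℝ] ℝ)
    (r m : ℕ) (hr : 0 < r) (hgcd : Nat.gcd r m = 1) (A B : Set E) (a b x : E)
    (ha : a ∈ A) (hb : b ∈ B) (hx : x ∈ A) (hab : f (a + b) = r)
    (hf : ∀ y ∈ A + B, 0 ≤ f y ∧ f y ≤ r) (hB : ∀ y ∈ B, f b ≤ f y → y = b)
    (ia : (∃ k : ℤ, f a = k) ∧ ∃ k : ℤ, g a = k) (ix : (∃ k : ℤ, f x = k) ∧ ∃ k : ℤ, g x = k)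
    (hL : m * f x + r * g x = m * f a + r * g a) : f x = f a ∨ B.Subsingleton := by
  obtain ⟨⟨k1, h1⟩, k2, h2⟩ := ia
  obtain ⟨⟨k3, h3⟩, k4, h4⟩ := ix
  have hz : (m : ℤ) * (k1 - k3) = r * (k4 - k2) := by
    rw [h1, h2, h3, h4] at hL
    have : (m : ℝ) * (k1 - k3) = r * (k4 - k2) := by linarith
    exact_mod_cast this
  have hd : (r : ℤ) ∣ k1 - k3 := by
    have hco : IsCoprime (r : ℤ) m := Nat.isCoprime_iff_coprime.2 hgcd
    exact hco.dvd_of_dvd_mul_left (Dvd.intro _ hz.symm)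
  have hxb := hf _ (Set.add_mem_add hx hb)
  rw [map_add] at hxb hab
  have hle : 0 ≤ k1 - k3 := by
    have : (0 : ℝ) ≤ k1 - k3 := by linarith [hxb.2]
    exact_mod_cast this
  rcases hle.eq_or_lt with h0 | h0
  · left
    rw [h1, h3]
    have : k3 = k1 := by omega
    rw [this]
  · right
    have hrk : (r : ℝ) ≤ k1 - k3 := by exact_mod_cast Int.le_of_dvd h0 hd
    have key : ∀ y ∈ B, y = b := fun y hy => by
      have := (hf _ (Set.add_mem_add hx hy)).1
      rw [map_add] at this
      exact hB y hy (by linarith)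
    exact fun y hy z hz => (key y hy).trans (key z hz).symm

/-- The convex-geometric core: a sum of two integrally generated polytopes admitting functionals
`f`, `g` and points `p`, `v` as described has a trivial summand. -/
lemma subsingleton_or_subsingleton {E : Type*} [AddCommGroup E] [Module ℝ E] (f g : E →ₗ[ℝ] ℝ)
    (r m : ℕ) (hr : 0 < r) (hgcd : Nat.gcd r m = 1) (S T : Set E)
    (iS : ∀ x ∈ S, (∃ k : ℤ, f x = k) ∧ ∃ k : ℤ, g x = k)
    (iT : ∀ x ∈ T, (∃ k : ℤ, f x = k) ∧ ∃ k : ℤ, g x = k) (p v : E)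
    (hp : p ∈ convexHull ℝ S + convexHull ℝ T) (hv : v ∈ convexHull ℝ S + convexHull ℝ T)
    (hvp : v ≠ p) (hfp : f p = r) (hgp : g p = 0)
    (hf : ∀ y ∈ convexHull ℝ S + convexHull ℝ T, 0 ≤ f y ∧ f y ≤ r)
    (hfu : ∀ y ∈ convexHull ℝ S + convexHull ℝ T, r ≤ f y → y = p)
    (hL : ∀ y ∈ convexHull ℝ S + convexHull ℝ T, m * f y + r * g y ≤ r * m)
    (hLv : m * f v + r * g v = r * m) :
    (convexHull ℝ S).Subsingleton ∨ (convexHull ℝ T).Subsingleton := by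
  by_contra! hcon
  obtain ⟨hA, hB⟩ := hcon
  rw [← Set.not_subsingleton_iff] at hA hB
  obtain ⟨a, ha, b, hb, rfl⟩ := Set.mem_add.1 hp
  have hua : ∀ y ∈ convexHull ℝ S, f a ≤ f y → y = a := fun y hy h => by
    have := hfu _ (Set.add_mem_add hy hb) (by rw [map_add] at hfp ⊢; linarith)
    exact add_right_cancel this
  have hub : ∀ y ∈ convexHull ℝ T, f b ≤ f y → y = b := fun y hy h => by
    have := hfu _ (Set.add_mem_add ha hy) (by rw [map_add] at hfp ⊢; linarith)
    exact add_left_cancel this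
  have haS := mem_of_unique_max f S a ha hua
  have hbT := mem_of_unique_max f T b hb hub
  let L : E →ₗ[ℝ] ℝ := (m : ℝ) • f + (r : ℝ) • g
  have hLe : ∀ x, L x = m * f x + r * g x := fun x => rfl
  have hLp : L a + L b = r * m := by
    rw [← map_add, hLe, hfp, hgp]; ring
  have hSa : ∀ x ∈ convexHull ℝ S, x = a ∨ L x < L a := by
    refine eq_or_lt_of_mem_convexHull L S a fun x hx => ?_
    have hxA := subset_convexHull ℝ S hx
    have h1 : L x + L b ≤ r * m := by
      rw [← map_add]; exact hL _ (Set.add_mem_add hxA hb)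
    by_cases h : L x = L a
    · left
      rcases eq_or_subsingleton f g r m hr hgcd _ _ a b x ha hb hxA hfp hf hub (iS a haS)
        (iS x hx) h with h | h
      · exact hua x hxA h.ge
      · exact absurd h hB
    · right
      exact lt_of_le_of_ne (by linarith) h
  have hTb : ∀ x ∈ convexHull ℝ T, x = b ∨ L x < L b := by
    refine eq_or_lt_of_mem_convexHull L T b fun x hx => ?_
    have hxB := subset_convexHull ℝ T hx
    have h1 : L a + L x ≤ r * m := by
      rw [← map_add]; exact hL _ (Set.add_mem_add ha hxB)
    by_cases h : L x = L b
    · left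
      rcases eq_or_subsingleton f g r m hr hgcd _ _ b a x hb ha hxB (by rwa [add_comm])
        (by rwa [add_comm]) hua (iT b hbT) (iT x hx) h with h | h
      · exact hub x hxB h.ge
      · exact absurd h hA
    · right
      exact lt_of_le_of_ne (by linarith) h
  obtain ⟨a', ha', b', hb', rfl⟩ := Set.mem_add.1 hv
  have hLv' : L a' + L b' = r * m := by rw [← map_add]; exact hLv
  rcases hSa a' ha' with rfl | h1 <;> rcases hTb b' hb' with rfl | h2
  · exact hvp rfl
  all_goals linarith

/-- Let `P₁ = Q₁ + Q₂` where `Q₁ ∈ ℂ[z₁]` is nonconstant of degree `r`,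
`Q₂ ∈ ℂ[z₂,…,z_ν]` is nonconstant of degree `m`, and `Q₁(0) = Q₂(0) = 0`.
If `gcd(r, m) = 1` then `N(P₁)` is integrally indecomposable. -/
theorem split_first_variable_newtonPolytope_indecomposable
    (n ν : ℕ) (hn : 3 ≤ n) (hν1 : 2 ≤ ν) (hν2 : ν ≤ n - 1)
    (P₁ Q₁ Q₂ : MvPolynomial (Fin n) ℂ)
    (hP1 : P₁ = Q₁ + Q₂)
    (hQ1var : ∀ w ∈ Q₁.support, ∀ i : Fin n, 1 ≤ (i : ℕ) → w i = 0)
    (hQ2var : ∀ w ∈ Q₂.support, ∀ i : Fin n, ((i : ℕ) = 0 ∨ ν ≤ (i : ℕ)) → w i = 0)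
    (r m : ℕ) (hr : r = Q₁.totalDegree) (hm : m = Q₂.totalDegree)
    (hncQ1 : 0 < Q₁.totalDegree) (hncQ2 : 0 < Q₂.totalDegree)
    (h01 : MvPolynomial.coeff 0 Q₁ = 0) (h02 : MvPolynomial.coeff 0 Q₂ = 0)
    (hgcd : Nat.gcd r m = 1) :
    ¬ IntegrallyDecomposable (newtonPolytope P₁) := by
  rintro ⟨A, B, ⟨S, -, iS, rfl⟩, ⟨T, -, iT, rfl⟩, ⟨a, ha, a', ha', haa⟩, ⟨b, hb, b', hb', hbb⟩, hC⟩
  rw [← hr] at hncQ1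
  rw [← hm] at hncQ2
  let i0 : Fin n := ⟨0, by omega⟩
  let f : (Fin n → ℝ) →ₗ[ℝ] ℝ := LinearMap.proj i0
  let g : (Fin n → ℝ) →ₗ[ℝ] ℝ := ∑ i ∈ Finset.univ.erase i0, LinearMap.proj i
  let φ : (Fin n →₀ ℕ) → (Fin n → ℝ) := fun w i => (w i : ℝ)
  have hf : ∀ x, f x = x i0 := fun x => rfl
  have hg : ∀ x, g x = ∑ i ∈ Finset.univ.erase i0, x i := fun x => by simp [g]
  have hint : ∀ x : Fin n → ℝ, (∀ i, ∃ k : ℤ, x i = k) →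
      (∃ k : ℤ, f x = k) ∧ ∃ k : ℤ, g x = k := fun x hx => by
    refine ⟨hx i0, ?_⟩
    choose k hk using hx
    exact ⟨∑ i ∈ Finset.univ.erase i0, k i, by rw [hg]; push_cast; simp [hk]⟩
  have hdeg : ∀ w : Fin n →₀ ℕ, (w.sum fun _ e => e) = w i0 + ∑ i ∈ Finset.univ.erase i0, w i :=
    fun w => by
      rw [Finsupp.sum_fintype _ _ (fun _ => rfl), Finset.add_sum_erase _ _ (Finset.mem_univ _)]
  have hgφ : ∀ w, g (φ w) = ((∑ i ∈ Finset.univ.erase i0, w i : ℕ) : ℝ) := fun w => by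
    rw [hg]; push_cast; rfl
  have h1 : ∀ w ∈ Q₁.support, ∑ i ∈ Finset.univ.erase i0, w i = 0 := fun w hw =>
    Finset.sum_eq_zero fun i hi => hQ1var w hw i (by
      have := Finset.ne_of_mem_erase hi
      by_contra h
      exact this (Fin.ext (by simp only [i0]; omega)))
  have h2 : ∀ w ∈ Q₂.support, w i0 = 0 := fun w hw => hQ2var w hw i0 (Or.inl rfl)
  have d1 : ∀ w ∈ Q₁.support, w i0 ≤ r := fun w hw => by
    have := MvPolynomial.le_totalDegree hw
    rw [hdeg, h1 w hw] at this
    omega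
  have d2 : ∀ w ∈ Q₂.support, ∑ i ∈ Finset.univ.erase i0, w i ≤ m := fun w hw => by
    have := MvPolynomial.le_totalDegree hw
    rw [hdeg, h2 w hw] at this
    omega
  have ex : ∀ Q : MvPolynomial (Fin n) ℂ, 0 < Q.totalDegree →
      ∃ w ∈ Q.support, (w.sum fun _ e => e) = Q.totalDegree := fun Q hQ => by
    have hne : Q.support.Nonempty := by
      rw [MvPolynomial.support_nonempty]
      rintro rfl
      simp at hQ
    obtain ⟨w, hw, h⟩ := Finset.exists_mem_eq_sup Q.support hne fun s => s.sum fun _ e => e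
    exact ⟨w, hw, h.symm⟩
  obtain ⟨u, hu, hur⟩ := ex Q₁ (hr ▸ hncQ1)
  obtain ⟨v, hv, hvm⟩ := ex Q₂ (hm ▸ hncQ2)
  rw [← hr, hdeg, h1 u hu, add_zero] at hur
  rw [← hm, hdeg, h2 v hv, zero_add] at hvm
  -- The supports of `Q₁` and `Q₂` are separated by the degree in `z₁`, so nothing cancels here.
  have hu2 : u ∉ Q₂.support := fun h => by have := h2 u h; omega
  have hv1 : v ∉ Q₁.support := fun h => by have := h1 v h; omega
  have huP : u ∈ P₁.support := by
    rw [MvPolynomial.mem_support_iff] at hu ⊢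
    rw [hP1, MvPolynomial.coeff_add, MvPolynomial.notMem_support_iff.1 hu2, add_zero]
    exact hu
  have hvP : v ∈ P₁.support := by
    rw [MvPolynomial.mem_support_iff] at hv ⊢
    rw [hP1, MvPolynomial.coeff_add, MvPolynomial.notMem_support_iff.1 hv1, zero_add]
    exact hv
  have hsupp : ∀ w ∈ P₁.support, w ∈ Q₁.support ∨ w ∈ Q₂.support := fun w hw => by
    rw [hP1] at hw
    exact Finset.mem_union.1 (MvPolynomial.support_add hw)
  have hmem : ∀ w ∈ P₁.support, φ w ∈ newtonPolytope P₁ := fun w hw =>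
    subset_convexHull ℝ _ ⟨w, hw, rfl⟩
  have hfu : f (φ u) = r := by rw [hf, ← hur]
  have hfv : f (φ v) = 0 := by
    rw [hf]; simp [φ, h2 v hv]
  have hrpos : (0 : ℝ) < r := by exact_mod_cast hncQ1
  have hmax : ∀ x ∈ newtonPolytope P₁, x = φ u ∨ f x < f (φ u) := by
    refine eq_or_lt_of_mem_convexHull f _ _ ?_
    rintro _ ⟨w, hw, rfl⟩
    change φ w = φ u ∨ f (φ w) < f (φ u)
    rw [hfu]
    rcases hsupp w hw with h | h
    · rcases (d1 w h).eq_or_lt with h' | h'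
      · left
        have : w = u := by
          ext i
          by_cases hi : i = i0
          · rw [hi, h', hur]
          · have hi1 : 1 ≤ (i : ℕ) := by
              by_contra hlt
              exact hi (Fin.ext (by simp only [i0]; omega))
            rw [hQ1var w h i hi1, hQ1var u hu i hi1]
        rw [this]
      · right
        change (w i0 : ℝ) < r
        exact_mod_cast h'
    · right
      change (w i0 : ℝ) < r
      rw [h2 w h]
      simpa using hrpos
  have hnonneg : ∀ x ∈ newtonPolytope P₁, 0 ≤ f x := fun x hx => by
    have := le_of_mem_convexHull (-f) _ 0 (by
      rintro _ ⟨w, hw, rfl⟩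
      change -(w i0 : ℝ) ≤ 0
      simp) x hx
    simpa using this
  have hL : ∀ x ∈ newtonPolytope P₁, m * f x + r * g x ≤ r * m := by
    refine le_of_mem_convexHull ((m : ℝ) • f + (r : ℝ) • g) _ _ ?_
    rintro _ ⟨w, hw, rfl⟩
    change (m : ℝ) * (w i0 : ℝ) + r * g (φ w) ≤ r * m
    rw [hgφ]
    norm_cast
    rcases hsupp w hw with h | h
    · rw [h1 w h]
      nlinarith [d1 w h]
    · rw [h2 w h]
      nlinarith [d2 w h]
  have hne : φ v ≠ φ u := fun h => by
    rw [← h, hfv] at hfu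
    linarith
  have main := subsingleton_or_subsingleton f g r m hncQ1 hgcd (S : Set (Fin n → ℝ)) T
    (fun x hx => hint x (iS x hx)) (fun x hx => hint x (iT x hx)) (φ u) (φ v)
  rw [← hC] at main
  rcases main (hmem u huP) (hmem v hvP) hne hfu (by rw [hgφ, h1 u hu]; simp)
    (fun y hy => ⟨hnonneg y hy, by
      rcases hmax y hy with rfl | h
      · exact hfu.le
      · exact hfu ▸ h.le⟩)
    (fun y hy h => (hmax y hy).resolve_right (by rw [hfu]; exact not_lt.2 h)) hL
    (by rw [hfv, hgφ, hvm]; ring) with h | h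
  · exact haa (h ha ha')
  · exact hbb (h hb hb')
end
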